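/- Let C be a Jacobi matrix and λ ∈ ℝ. If every generalized eigenvector {u_n} associated with λ satisfies ∑_{n≥0} u_n² = ∞ (i.e., no generalized eigenvector belongs to ℓ²), then C is self-adjoint, λ is not an eigenvalue of C, and λ belongs to the spectrum σ(C). -/

import Mathlib

/-!
The three claims rest on a variation-of-constants argument.

For sequences `x, y` in the maximal domain, Green's identity says that the partial sums of
`(Cx)ₙ yₙ - xₙ (Cy)ₙ` are the Wronskians `aₙ (xₙ₊₁ yₙ - xₙ yₙ₊₁)`, so these converge. The heart of
the proof is `hasSum_green_zero`: for real `x, y` the limit `s` is zero. Otherwise the Wronskian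
of `x, y` is eventually bounded away from zero, so any generalized eigenvector `u` may be expanded
as `uₙ₊₁ = cₙ xₙ₊₁ + dₙ yₙ₊₁`, with coefficients given by the Wronskians of `u` with `y` and `x`.
Consecutive coefficients differ by a summable relative amount (products of the ℓ² sequences
`x, y, (C - λ)x, (C - λ)y`), so a discrete Gronwall bound keeps them bounded and `u ∈ ℓ²`,
which the hypothesis forbids.

Vanishing of the limit, applied to real and imaginary parts, is symmetry of `C` on its maximal
domain. Testing against unit vectors shows that the adjoint acts by the same formal matrix, whence
self-adjointness. The real or imaginary part of an eigenvector would be an ℓ² generalized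
eigenvector, and so would the real part of an ℓ² solution of `(C - λ)x = e₀`; hence `λ` is no
eigenvalue and `C - λ` is not onto.
-/

open Filter Topology

noncomputable section

/-- Membership in the weighted ℓ² space with weight `w`. -/
def MemL2w (w : ℕ → ℝ) (f : ℕ → ℂ) : Prop :=
  Summable fun n => w n * ‖f n‖ ^ 2

/-- The weighted ℓ² inner product. -/
def innerW (w : ℕ → ℝ) (f g : ℕ → ℂ) : ℂ :=
  ∑' n, (w n : ℂ) * star (f n) * g n

/-- The formal tridiagonal action of the Jacobi matrix with off-diagonal entries `a`
and diagonal entries `b`:  `(Cx)₀ = b₀x₀ + a₀x₁`,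
`(Cx)ₙ = aₙ₋₁xₙ₋₁ + bₙxₙ + aₙxₙ₊₁` for `n ≥ 1`. -/
def jacobiAct (a b : ℕ → ℝ) (x : ℕ → ℂ) : ℕ → ℂ
  | 0 => (b 0 : ℂ) * x 0 + (a 0 : ℂ) * x 1
  | n + 1 => (a n : ℂ) * x n + (b (n + 1) : ℂ) * x (n + 1) + (a (n + 1) : ℂ) * x (n + 2)

/-- The maximal domain of the formal operator `T` inside the weighted ℓ² space. -/
def DomW (w : ℕ → ℝ) (T : (ℕ → ℂ) → ℕ → ℂ) : Set (ℕ → ℂ) :=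
  {x | MemL2w w x ∧ MemL2w w (T x)}

/-- `T`, on its maximal domain in weighted ℓ², is self-adjoint:
the graph of the adjoint operator coincides with the graph of `T`. -/
def IsSelfAdjointW (w : ℕ → ℝ) (T : (ℕ → ℂ) → ℕ → ℂ) : Prop :=
  ∀ y z : ℕ → ℂ, MemL2w w y → MemL2w w z →
    ((∀ x ∈ DomW w T, innerW w (T x) y = innerW w x z) ↔ (y ∈ DomW w T ∧ T y = z))

/-- The point spectrum (set of eigenvalues) of `T` on its maximal domain. -/
def eigenW (w : ℕ → ℝ) (T : (ℕ → ℂ) → ℕ → ℂ) : Set ℂ :=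
  {l | ∃ x ∈ DomW w T, x ≠ 0 ∧ T x = fun n => l * x n}

/-- The spectrum of `T`: those `l` for which `T - l` is not a bijection from the maximal
domain onto the weighted ℓ² space (for a closed operator this is the usual spectrum). -/
def spectrumW (w : ℕ → ℝ) (T : (ℕ → ℂ) → ℕ → ℂ) : Set ℂ :=
  {l | ¬ ((∀ x ∈ DomW w T, T x = (fun n => l * x n) → x = 0) ∧
          ∀ y : ℕ → ℂ, MemL2w w y → ∃ x ∈ DomW w T, (fun n => T x n - l * x n) = y)}

/-- The essential spectrum: the set of accumulation points of the spectrum. -/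
def essSpectrumW (w : ℕ → ℝ) (T : (ℕ → ℂ) → ℕ → ℂ) : Set ℂ :=
  {z | AccPt z (𝓟 (spectrumW w T))}

/-- `u` is a generalized eigenvector of the Jacobi matrix `(a, b)` associated with `lam`:
`(u 0, u 1) ≠ (0, 0)` and `aₙ uₙ₊₁ = (lam − bₙ) uₙ − aₙ₋₁ uₙ₋₁` for all `n ≥ 1`. -/
def IsGenEig (a b : ℕ → ℝ) (lam : ℝ) (u : ℕ → ℝ) : Prop :=
  ¬(u 0 = 0 ∧ u 1 = 0) ∧
  ∀ n : ℕ, a (n + 1) * u (n + 2) = (lam - b (n + 1)) * u (n + 1) - a n * u n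

/-! ### Green identities -/

/-- The formal Jacobi matrix acting on real sequences. -/
def jacR (a b x : ℕ → ℝ) : ℕ → ℝ
  | 0 => b 0 * x 0 + a 0 * x 1
  | n + 1 => a n * x n + b (n + 1) * x (n + 1) + a (n + 1) * x (n + 2)

/-- The (weighted) Wronskian `aₙ (xₙ₊₁ yₙ - xₙ yₙ₊₁)` of two real sequences. -/
def wronR (a x y : ℕ → ℝ) (n : ℕ) : ℝ := a n * (x (n + 1) * y n - x n * y (n + 1))

lemma jacobiAct_re (a b : ℕ → ℝ) (x : ℕ → ℂ) (n : ℕ) :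
    (jacobiAct a b x n).re = jacR a b (fun k => (x k).re) n := by
  cases n <;> simp [jacobiAct, jacR]

lemma jacobiAct_im (a b : ℕ → ℝ) (x : ℕ → ℂ) (n : ℕ) :
    (jacobiAct a b x n).im = jacR a b (fun k => (x k).im) n := by
  cases n <;> simp [jacobiAct, jacR]

lemma wronR_succ (a b x y : ℕ → ℝ) (n : ℕ) :
    wronR a x y (n + 1) = wronR a x y n +
      (jacR a b x (n + 1) * y (n + 1) - x (n + 1) * jacR a b y (n + 1)) := by
  simp only [wronR, jacR]; ring

/-- Green's identity for real sequences. -/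
lemma sum_green_real (a b x y : ℕ → ℝ) (n : ℕ) :
    ∑ k ∈ Finset.range (n + 1), (jacR a b x k * y k - x k * jacR a b y k) = wronR a x y n := by
  induction n with
  | zero => simp [jacR, wronR]; ring
  | succ n ih => rw [Finset.sum_range_succ, ih, wronR_succ a b]

/-- Green's identity for the sesquilinear form on complex sequences. -/
lemma sum_green_complex (a b : ℕ → ℝ) (x y : ℕ → ℂ) (n : ℕ) :
    ∑ k ∈ Finset.range (n + 1),
      (star (jacobiAct a b x k) * y k - star (x k) * jacobiAct a b y k) =
      a n * (star (x (n + 1)) * y n - star (x n) * y (n + 1)) := by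
  induction n with
  | zero => simp [jacobiAct]; ring
  | succ n ih =>
    rw [Finset.sum_range_succ, ih]
    simp [jacobiAct]; ring

/-! ### Square-summable sequences and a Gronwall bound -/

lemma summable_mul_of_sq {f g : ℕ → ℝ} (hf : Summable fun n => f n ^ 2)
    (hg : Summable fun n => g n ^ 2) : Summable fun n => f n * g n := by
  refine Summable.of_norm_bounded (hf.add hg) fun n => ?_
  rw [Real.norm_eq_abs, abs_le]
  constructor <;> nlinarith [sq_nonneg (f n + g n), sq_nonneg (f n - g n)]

lemma summable_sq_add {f g : ℕ → ℝ} (hf : Summable fun n => f n ^ 2)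
    (hg : Summable fun n => g n ^ 2) : Summable fun n => (f n + g n) ^ 2 := by
  refine ((hf.add hg).add ((summable_mul_of_sq hf hg).mul_left 2)).congr fun n => ?_
  ring

/-- Discrete Gronwall inequality with summable rates: the sequence stays bounded. -/
lemma gronwall_bounded {E t : ℕ → ℝ} (hE : ∀ n, 0 ≤ E n) (ht : ∀ n, 0 ≤ t n)
    (hs : Summable t) (h : ∀ n, E (n + 1) ≤ E n * (1 + t n)) :
    ∃ K, 0 ≤ K ∧ ∀ n, E n ≤ K := by
  have key : ∀ n, E n ≤ E 0 * Real.exp (∑ k ∈ Finset.range n, t k) := by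
    intro n
    induction n with
    | zero => simp
    | succ n ih =>
      rw [Finset.sum_range_succ, Real.exp_add, ← mul_assoc]
      calc E (n + 1) ≤ E n * (1 + t n) := h n
        _ ≤ E n * Real.exp (t n) :=
          mul_le_mul_of_nonneg_left (by linarith [Real.add_one_le_exp (t n)]) (hE n)
        _ ≤ _ := mul_le_mul_of_nonneg_right ih (Real.exp_pos _).le
  refine ⟨E 0 * Real.exp (∑' k, t k), mul_nonneg (hE 0) (Real.exp_pos _).le, fun n => ?_⟩
  exact (key n).trans (mul_le_mul_of_nonneg_left
    (Real.exp_le_exp.2 (hs.sum_le_tsum _ fun k _ => ht k)) (hE 0))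

/-! ### Variation of constants -/

/-- The pairs `(uₙ, uₙ₊₁)` of the generalized eigenvector with `u₀ = 0`, `u₁ = 1`. -/
def solPair (a b : ℕ → ℝ) (lam : ℝ) : ℕ → ℝ × ℝ
  | 0 => (0, 1)
  | n + 1 => ((solPair a b lam n).2,
      ((lam - b (n + 1)) * (solPair a b lam n).2 - a n * (solPair a b lam n).1) / a (n + 1))

lemma exists_isGenEig (a b : ℕ → ℝ) (ha : ∀ n, 0 < a n) (lam : ℝ) :
    ∃ u, IsGenEig a b lam u := by
  refine ⟨fun n => (solPair a b lam n).1, by simp [solPair], fun n => ?_⟩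
  have := (ha (n + 1)).ne'
  simp only [solPair]
  field_simp

/-- If the Wronskian of `x, y` stays away from zero from index `N` on, where `x, y` and their
images are square-summable, then variation of constants makes every generalized eigenvector
square-summable. -/
lemma genEig_summable_of_wron {a b x y u : ℕ → ℝ} {lam δ : ℝ} {N : ℕ}
    (hx : Summable fun n => x n ^ 2) (hy : Summable fun n => y n ^ 2)
    (hJx : Summable fun n => jacR a b x n ^ 2) (hJy : Summable fun n => jacR a b y n ^ 2)
    (hδ : 0 < δ) (hW : ∀ n, N ≤ n → δ ≤ |wronR a x y n|) (hu : IsGenEig a b lam u) :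
    Summable fun n => u n ^ 2 := by
  have hJu : ∀ n, jacR a b u (n + 1) = lam * u (n + 1) := fun n => by
    have := hu.2 n
    simp only [jacR]; linarith
  have abs_sq : ∀ {f : ℕ → ℝ}, Summable (fun n => f n ^ 2) → Summable fun n => |f n| ^ 2 :=
    fun hf => by simpa [sq_abs] using hf
  have sub_sq : ∀ {f g : ℕ → ℝ}, Summable (fun n => f n ^ 2) → Summable (fun n => g n ^ 2) →
      Summable fun n => (g n - lam * f n) ^ 2 := fun {f g} hf hg => by
    have h1 : Summable fun n => (-lam * f n) ^ 2 :=
      (hf.mul_left (lam ^ 2)).congr fun n => by ring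
    exact (summable_sq_add hg h1).congr fun n => by ring
  set X : ℕ → ℝ := fun n => |x n| + |y n| with hX
  set F : ℕ → ℝ := fun n => |jacR a b x n - lam * x n| + |jacR a b y n - lam * y n| with hF
  have hXs : Summable fun n => X n ^ 2 := summable_sq_add (abs_sq hx) (abs_sq hy)
  have hFs : Summable fun n => F n ^ 2 :=
    summable_sq_add (abs_sq (sub_sq hx hJx)) (abs_sq (sub_sq hy hJy))
  have hX0 : ∀ n, 0 ≤ X n := fun n => by positivity
  have hF0 : ∀ n, 0 ≤ F n := fun n => by positivity
  set E : ℕ → ℝ := fun n => |wronR a u y n| + |wronR a x u n| with hE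
  have hE0 : ∀ n, 0 ≤ E n := fun n => by positivity
  -- Cramer's rule for `u` in the basis `x, y`
  have hbd : ∀ n, N ≤ n → |u (n + 1)| ≤ δ⁻¹ * (E n * X (n + 1)) := by
    intro n hn
    have hid : u (n + 1) * wronR a x y n =
        wronR a u y n * x (n + 1) + wronR a x u n * y (n + 1) := by
      simp only [wronR]; ring
    have h1 : |u (n + 1)| * |wronR a x y n| ≤ E n * X (n + 1) := by
      rw [← abs_mul, hid]
      refine (abs_add_le _ _).trans ?_
      rw [abs_mul, abs_mul]
      simp only [hE, hX]
      nlinarith [mul_nonneg (abs_nonneg (wronR a u y n)) (abs_nonneg (y (n + 1))),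
        mul_nonneg (abs_nonneg (wronR a x u n)) (abs_nonneg (x (n + 1)))]
    rw [inv_mul_eq_div, le_div_iff₀ hδ]
    exact (mul_le_mul_of_nonneg_left (hW n hn) (abs_nonneg _)).trans h1
  have hstep : ∀ n, E (n + 1) ≤ E n + |u (n + 1)| * F (n + 1) := by
    intro n
    have h1 : wronR a u y (n + 1) =
        wronR a u y n + -(u (n + 1) * (jacR a b y (n + 1) - lam * y (n + 1))) := by
      rw [wronR_succ a b, hJu]; ring
    have h2 : wronR a x u (n + 1) =
        wronR a x u n + u (n + 1) * (jacR a b x (n + 1) - lam * x (n + 1)) := by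
      rw [wronR_succ a b, hJu]; ring
    have h3 := abs_add_le (wronR a u y n) (-(u (n + 1) * (jacR a b y (n + 1) - lam * y (n + 1))))
    have h4 := abs_add_le (wronR a x u n) (u (n + 1) * (jacR a b x (n + 1) - lam * x (n + 1)))
    rw [← h1, abs_neg, abs_mul] at h3
    rw [← h2, abs_mul] at h4
    simp only [hE, hF, mul_add]
    linarith
  have hts : Summable fun n => δ⁻¹ * (X n * F n) := (summable_mul_of_sq hXs hFs).mul_left _
  obtain ⟨K, hK0, hK⟩ := gronwall_bounded (E := fun m => E (N + m))
    (t := fun m => δ⁻¹ * (X (N + m + 1) * F (N + m + 1))) (fun m => hE0 _)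
    (fun m => mul_nonneg (inv_nonneg.2 hδ.le) (mul_nonneg (hX0 _) (hF0 _)))
    (((summable_nat_add_iff (N + 1)).2 hts).congr fun m => by
      rw [show m + (N + 1) = N + m + 1 by ring])
    (fun m => by
      refine (hstep (N + m)).trans ?_
      have := mul_le_mul_of_nonneg_right (hbd (N + m) (by omega)) (hF0 (N + m + 1))
      linarith)
  refine (summable_nat_add_iff (N + 1)).1 ?_
  refine Summable.of_nonneg_of_le (fun _ => sq_nonneg _) (fun m => ?_)
    (((summable_nat_add_iff (N + 1)).2 hXs).mul_left ((δ⁻¹ * K) ^ 2))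
  rw [show m + (N + 1) = N + m + 1 by ring, ← mul_pow, ← sq_abs (u _)]
  refine pow_le_pow_left₀ (abs_nonneg _) ((hbd (N + m) (by omega)).trans ?_) 2
  rw [mul_assoc]
  exact mul_le_mul_of_nonneg_left (mul_le_mul_of_nonneg_right (hK m) (hX0 _))
    (inv_nonneg.2 hδ.le)

/-- The boundary form of the maximal operator vanishes on real sequences. -/
lemma hasSum_green_zero {a b : ℕ → ℝ} (ha : ∀ n, 0 < a n) {lam : ℝ}
    (h : ∀ u : ℕ → ℝ, IsGenEig a b lam u → ¬ Summable fun n => u n ^ 2) {x y : ℕ → ℝ}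
    (hx : Summable fun n => x n ^ 2) (hy : Summable fun n => y n ^ 2)
    (hJx : Summable fun n => jacR a b x n ^ 2) (hJy : Summable fun n => jacR a b y n ^ 2) :
    HasSum (fun n => jacR a b x n * y n - x n * jacR a b y n) 0 := by
  have hs := ((summable_mul_of_sq hJx hy).sub (summable_mul_of_sq hx hJy)).hasSum
  set s := ∑' n, (jacR a b x n * y n - x n * jacR a b y n) with hsdef
  suffices s = 0 by rwa [this] at hs
  by_contra hne
  have hlim : Tendsto (wronR a x y) atTop (𝓝 s) := by
    refine ((tendsto_add_atTop_iff_nat 1).2 hs.tendsto_sum_nat).congr fun n => ?_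
    exact sum_green_real a b x y n
  have hpos : 0 < |s| := abs_pos.2 hne
  obtain ⟨N, hN⟩ := eventually_atTop.1
    (hlim.abs.eventually (lt_mem_nhds (half_lt_self hpos)))
  obtain ⟨u, hu⟩ := exists_isGenEig a b ha lam
  exact h u hu (genEig_summable_of_wron hx hy hJx hJy (half_pos hpos)
    (fun n hn => (hN n hn).le) hu)

/-! ### Symmetry, unit vectors and eigenvectors -/

lemma MemL2w.re {x : ℕ → ℂ} (hx : MemL2w (fun _ => 1) x) : Summable fun n => (x n).re ^ 2 := by
  refine Summable.of_nonneg_of_le (fun _ => sq_nonneg _) (fun n => ?_) hx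
  rw [one_mul, ← sq_abs]
  exact pow_le_pow_left₀ (abs_nonneg _) (Complex.abs_re_le_norm _) 2

lemma MemL2w.im {x : ℕ → ℂ} (hx : MemL2w (fun _ => 1) x) : Summable fun n => (x n).im ^ 2 := by
  refine Summable.of_nonneg_of_le (fun _ => sq_nonneg _) (fun n => ?_) hx
  rw [one_mul, ← sq_abs]
  exact pow_le_pow_left₀ (abs_nonneg _) (Complex.abs_im_le_norm _) 2

lemma MemL2w.summable_inner {x y : ℕ → ℂ} (hx : MemL2w (fun _ => 1) x)
    (hy : MemL2w (fun _ => 1) y) : Summable fun n => star (x n) * y n := by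
  have hx' : Summable fun n => ‖x n‖ ^ 2 := by simpa [MemL2w] using hx
  have hy' : Summable fun n => ‖y n‖ ^ 2 := by simpa [MemL2w] using hy
  refine Summable.of_norm ((summable_mul_of_sq hx' hy').congr fun n => ?_)
  simp

/-- Symmetry of the Jacobi matrix on its maximal domain. -/
lemma jacobi_symm {a b : ℕ → ℝ} (ha : ∀ n, 0 < a n) {lam : ℝ}
    (h : ∀ u : ℕ → ℝ, IsGenEig a b lam u → ¬ Summable fun n => u n ^ 2) {x y : ℕ → ℂ}
    (hx : x ∈ DomW (fun _ => 1) (jacobiAct a b)) (hy : y ∈ DomW (fun _ => 1) (jacobiAct a b)) :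
    innerW (fun _ => 1) (jacobiAct a b x) y = innerW (fun _ => 1) x (jacobiAct a b y) := by
  have xr := hx.1.re
  have xi := hx.1.im
  have yr := hy.1.re
  have yi := hy.1.im
  have Xr := hx.2.re
  have Xi := hx.2.im
  have Yr := hy.2.re
  have Yi := hy.2.im
  simp only [jacobiAct_re, jacobiAct_im] at Xr Xi Yr Yi
  have hre := (hasSum_green_zero ha h xr yr Xr Yr).add (hasSum_green_zero ha h xi yi Xi Yi)
  have him := (hasSum_green_zero ha h xr yi Xr Yi).sub (hasSum_green_zero ha h xi yr Xi Yr)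
  have hsum : HasSum (fun n => star (jacobiAct a b x n) * y n - star (x n) * jacobiAct a b y n)
      0 := by
    rw [Complex.hasSum_iff]
    constructor
    · rw [add_zero] at hre
      rw [Complex.zero_re]
      refine (congrArg (fun f => HasSum f (0 : ℝ)) (funext fun n => ?_)).mpr hre
      simp [jacobiAct_re, jacobiAct_im]; ring
    · rw [sub_zero] at him
      rw [Complex.zero_im]
      refine (congrArg (fun f => HasSum f (0 : ℝ)) (funext fun n => ?_)).mpr him
      simp [jacobiAct_re, jacobiAct_im]; ring
  have h1 := (hx.2.summable_inner hy.1).tsum_sub (hx.1.summable_inner hy.2)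
  rw [hsum.tsum_eq] at h1
  simpa [innerW] using (sub_eq_zero.1 h1.symm)

/-- Testing against the unit vector `eₖ`: it lies in the domain, and moving the Jacobi matrix
off it extracts the `k`-th coordinate of the formal image. -/
lemma jacobi_test_single (a b : ℕ → ℝ) (k : ℕ) :
    (Pi.single k 1 : ℕ → ℂ) ∈ DomW (fun _ => 1) (jacobiAct a b) ∧
    (∀ y, innerW (fun _ => 1) (jacobiAct a b (Pi.single k 1)) y = jacobiAct a b y k) ∧
    ∀ z, innerW (fun _ => 1) (Pi.single k 1) z = z k := by
  have e0 : ∀ n, k < n → (Pi.single k 1 : ℕ → ℂ) n = 0 := fun n hn =>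
    Pi.single_eq_of_ne hn.ne' _
  have J0 : ∀ n, n ∉ Finset.range (k + 2) → jacobiAct a b (Pi.single k 1) n = 0 := by
    intro n hn
    obtain ⟨m, rfl⟩ : ∃ m, n = m + 1 := ⟨n - 1, by simp at hn; omega⟩
    simp only [Finset.mem_range, not_lt] at hn
    simp [jacobiAct, e0 m (by omega), e0 (m + 1) (by omega), e0 (m + 2) (by omega)]
  have hz : ∀ z : ℕ → ℂ,
      ∑ n ∈ Finset.range (k + 2), star ((Pi.single k 1 : ℕ → ℂ) n) * z n = z k := by
    intro z
    rw [Finset.sum_eq_single k]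
    · simp
    · intro n _ hn
      simp [Pi.single_eq_of_ne hn]
    · intro hk
      simp at hk
  have E0 : ∀ n, n ∉ Finset.range (k + 2) → (Pi.single k 1 : ℕ → ℂ) n = 0 := by
    intro n hn
    simp only [Finset.mem_range, not_lt] at hn
    exact e0 n (by omega)
  refine ⟨⟨?_, ?_⟩, fun y => ?_, fun z => ?_⟩
  · exact summable_of_ne_finset_zero (s := Finset.range (k + 2)) fun n hn => by simp [E0 n hn]
  · exact summable_of_ne_finset_zero (s := Finset.range (k + 2)) fun n hn => by simp [J0 n hn]
  · have hg := sum_green_complex a b (Pi.single k 1) y (k + 1)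
    rw [e0 (k + 1) (by omega), e0 (k + 1 + 1) (by omega), Finset.sum_sub_distrib,
      hz (jacobiAct a b y)] at hg
    simp only [star_zero, zero_mul, sub_zero, mul_zero, sub_eq_zero] at hg
    rw [innerW, tsum_eq_sum (s := Finset.range (k + 2)) fun n hn => by simp [J0 n hn], ← hg]
    simp
  · rw [innerW, tsum_eq_sum (s := Finset.range (k + 2)) fun n hn => by simp [E0 n hn], ← hz z]
    simp

/-- A nonzero real sequence annihilated by `C - lam` is a generalized eigenvector. -/
lemma isGenEig_of_jacR {a b u : ℕ → ℝ} (ha : ∀ n, 0 < a n) {lam : ℝ}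
    (hu : ∀ n, jacR a b u n = lam * u n) (hne : u ≠ 0) : IsGenEig a b lam u := by
  have hrec : ∀ n, a (n + 1) * u (n + 2) = (lam - b (n + 1)) * u (n + 1) - a n * u n := fun n => by
    have := hu (n + 1)
    simp only [jacR] at this
    linarith
  refine ⟨fun h0 => hne ?_, hrec⟩
  have key : ∀ n, u n = 0 ∧ u (n + 1) = 0 := by
    intro n
    induction n with
    | zero => exact h0
    | succ n ih =>
      refine ⟨ih.2, ?_⟩
      have := hrec n
      rw [ih.1, ih.2] at this
      simpa [(ha (n + 1)).ne'] using this
  exact funext fun n => (key n).1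

/-! ### Self-adjointness and spectrum -/

/-- Proposition 1: if no generalized eigenvector associated with `lam` is square-summable,
then the Jacobi matrix is self-adjoint, `lam` is not an eigenvalue, and `lam` belongs to
the spectrum. -/
theorem jacobi_selfAdjoint_of_genEigenvectors_not_l2
    (a b : ℕ → ℝ) (ha : ∀ n, 0 < a n) (lam : ℝ)
    (h : ∀ u : ℕ → ℝ, IsGenEig a b lam u → ¬ Summable fun n => u n ^ 2) :
    IsSelfAdjointW (fun _ => 1) (jacobiAct a b) ∧
    (lam : ℂ) ∉ eigenW (fun _ => 1) (jacobiAct a b) ∧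
    (lam : ℂ) ∈ spectrumW (fun _ => 1) (jacobiAct a b) := by
  refine ⟨fun y z hy hz => ⟨fun hyz => ?_, ?_⟩, ?_, ?_⟩
  · have hJ : jacobiAct a b y = z := funext fun k => by
      obtain ⟨hd, h1, h2⟩ := jacobi_test_single a b k
      rw [← h1, ← h2 z, hyz _ hd]
    exact ⟨⟨hy, hJ ▸ hz⟩, hJ⟩
  · rintro ⟨hyd, rfl⟩ x hx
    exact jacobi_symm ha h hx hyd
  · rintro ⟨x, hx, hne, hJ⟩
    have hr : (fun n => (x n).re) = 0 := by
      by_contra hr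
      exact h _ (isGenEig_of_jacR ha (fun n => by rw [← jacobiAct_re, hJ]; simp) hr) hx.1.re
    have hi : (fun n => (x n).im) = 0 := by
      by_contra hi
      exact h _ (isGenEig_of_jacR ha (fun n => by rw [← jacobiAct_im, hJ]; simp) hi) hx.1.im
    exact hne (funext fun n => Complex.ext (congrFun hr n) (congrFun hi n))
  · rintro ⟨-, hsurj⟩
    -- a preimage of `e₀` satisfies the eigenvalue recurrence at all indices `n ≥ 1`
    obtain ⟨x, hx, hxe⟩ := hsurj (Pi.single 0 1) (jacobi_test_single a b 0).1.1
    refine h (fun n => (x n).re) ⟨fun h0 => ?_, fun n => ?_⟩ hx.1.re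
    · have := congrArg Complex.re (congrFun hxe 0)
      simp [jacobiAct, h0.1, h0.2] at this
    · have := congrArg Complex.re (congrFun hxe (n + 1))
      simp [jacobiAct] at this
      linarith
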